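/- arXiv:2102.00412 — 3 statements merged into one kernel-verified Lean document; each statement's English description precedes it below -/
import Mathlib

section
/- Let n be a positive integer and let p and q be primes. Then 𝒜(p^n, q^n) = C(2n, n). -/
/-!
Put `N = ab`. Replacing `S''` by `N - S''` turns the condition on differences into
`S' + (N - S'') = {0, …, N - 1}`, so `𝒜(a, b)` counts the tilings `A + B = {0, …, ab - 1}` with
`|A| = a` and `|B| = b`; by cardinality every sum in such a tiling is attained once.

If `ab > 1`, exactly one of `A` and `B` contains `1`; by symmetry let it be `A`, and let `d > 1` be
the least number missing from `A`. By de Bruijn's structure theorem `A` is a union of blocks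
`[dt, dt + d)` and `B` consists of multiples of `d`. In particular `d` divides `|A|`. When `|A|` is
a power of a prime `p` this gives `p ∣ d`, so that `(A, B) = (pA' + [0, p), pB')` for a unique
tiling `(A', B')`, with `|A'| = |A| / p` and `|B'| = |B|`. Adding up the two cases gives Pascal's
rule, hence `𝒜(p ^ m, q ^ k) = C(m + k, m)`.
-/

open Polynomial

/-- `𝒜(a,b)`: the number of pairs `(S', S'')` of finite sets of nonnegative integers with
`|S'| = a`, `|S''| = b`, both subsets of `{0, …, ab}`, and difference set
`{y − x : x ∈ S', y ∈ S''} = {1, …, ab}`. -/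
noncomputable def gracefulCount (a b : ℕ) : ℕ :=
  Set.ncard {p : Finset ℕ × Finset ℕ |
    p.1.card = a ∧ p.2.card = b ∧
    p.1 ⊆ Finset.range (a * b + 1) ∧ p.2 ⊆ Finset.range (a * b + 1) ∧
    Finset.image (fun q : ℕ × ℕ => (q.2 : ℤ) - (q.1 : ℤ)) (p.1 ×ˢ p.2) =
      Finset.Icc (1 : ℤ) ((a : ℤ) * b)}

section

open Finset
open scoped Pointwise

/-! ### Tilings of an initial segment -/

/-- The nonempty sets `A` and `B` tile an initial segment of `ℕ`: every number in it is the sum of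
exactly one pair in `A ×ˢ B`. Uniqueness is encoded by requiring the segment to have length
`#A * #B`. -/
structure IsTiling (A B : Finset ℕ) : Prop where
  left_nonempty : A.Nonempty
  right_nonempty : B.Nonempty
  add_eq_range : A + B = range (#A * #B)

namespace IsTiling

variable {A B : Finset ℕ}

theorem symm (h : IsTiling A B) : IsTiling B A where
  left_nonempty := h.right_nonempty
  right_nonempty := h.left_nonempty
  add_eq_range := by rw [add_comm, h.add_eq_range, mul_comm]

theorem card_mul_card_pos (h : IsTiling A B) : 0 < #A * #B :=
  Nat.mul_pos h.left_nonempty.card_pos h.right_nonempty.card_pos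

theorem exists_add_eq (h : IsTiling A B) {x : ℕ} (hx : x < #A * #B) :
    ∃ a ∈ A, ∃ b ∈ B, a + b = x :=
  mem_add.1 (h.add_eq_range ▸ mem_range.2 hx)

theorem add_lt (h : IsTiling A B) {a b : ℕ} (ha : a ∈ A) (hb : b ∈ B) : a + b < #A * #B :=
  mem_range.1 (h.add_eq_range ▸ add_mem_add ha hb)

theorem eq_and_eq_of_add_eq (h : IsTiling A B) {a b a' b' : ℕ} (ha : a ∈ A) (hb : b ∈ B)
    (ha' : a' ∈ A) (hb' : b' ∈ B) (hab : a + b = a' + b') : a = a' ∧ b = b' := by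
  have add_injOn := card_add_iff.1 (by rw [h.add_eq_range, card_range] : #(A + B) = #A * #B)
  exact Prod.mk.inj (add_injOn (Set.mk_mem_prod ha hb) (Set.mk_mem_prod ha' hb') hab)

theorem zero_mem_left (h : IsTiling A B) : 0 ∈ A := by
  obtain ⟨a, ha, b, -, hab⟩ := h.exists_add_eq h.card_mul_card_pos
  rwa [Nat.eq_zero_of_add_eq_zero_right hab] at ha

theorem zero_mem_right (h : IsTiling A B) : 0 ∈ B :=
  h.symm.zero_mem_left

theorem lt_of_mem_left (h : IsTiling A B) {a : ℕ} (ha : a ∈ A) : a < #A * #B :=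
  h.add_lt ha h.zero_mem_right

theorem lt_of_mem_right (h : IsTiling A B) {b : ℕ} (hb : b ∈ B) : b < #A * #B := by
  simpa using h.add_lt h.zero_mem_left hb

theorem left_subset_range (h : IsTiling A B) : A ⊆ range (#A * #B) :=
  fun _ ha ↦ mem_range.2 (h.lt_of_mem_left ha)

theorem right_subset_range (h : IsTiling A B) : B ⊆ range (#A * #B) :=
  fun _ hb ↦ mem_range.2 (h.lt_of_mem_right hb)

theorem pos_of_notMem_left (h : IsTiling A B) {x : ℕ} (hx : x ∉ A) : 0 < x :=
  Nat.pos_of_ne_zero fun hx0 ↦ hx (hx0 ▸ h.zero_mem_left)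

theorem eq_zero_of_mem_of_mem (h : IsTiling A B) {x : ℕ} (hA : x ∈ A) (hB : x ∈ B) : x = 0 :=
  (h.eq_and_eq_of_add_eq hA h.zero_mem_right h.zero_mem_left hB (add_comm x 0)).1

theorem one_mem_right_iff (h : IsTiling A B) (hN : 1 < #A * #B) : 1 ∈ B ↔ 1 ∉ A := by
  refine ⟨fun hB hA ↦ one_ne_zero (h.eq_zero_of_mem_of_mem hA hB), fun hA ↦ ?_⟩
  obtain ⟨a, ha, b, hb, hab⟩ := h.exists_add_eq hN
  rcases Nat.add_eq_one_iff.1 hab with ⟨-, rfl⟩ | ⟨rfl, -⟩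
  · exact hb
  · exact absurd ha hA

end IsTiling

/-! ### De Bruijn's structure theorem -/

/-- The conclusion of de Bruijn's structure theorem, truncated at `k` so that it can be proved by
induction: below `k`, the set `B` consists of multiples of `d` and `A` of whole blocks
`t, …, t + d - 1` with `d ∣ t`. -/
structure AlignedBelow (d : ℕ) (A B : Finset ℕ) (k : ℕ) : Prop where
  dvd_of_mem_right : ∀ b ∈ B, b < k → d ∣ b
  add_mem_left_iff : ∀ t r, d ∣ t → r < d → t + r < k → (t + r ∈ A ↔ t ∈ A)

namespace IsTiling

variable {A B : Finset ℕ} {d : ℕ}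

theorem le_of_mem_right (h : IsTiling A B) (hlt : ∀ i < d, i ∈ A) {b : ℕ} (hb : b ∈ B)
    (hb0 : b ≠ 0) : d ≤ b := by
  by_contra! hbd
  exact hb0 (h.eq_zero_of_mem_of_mem (hlt b hbd) hb)

theorem mem_right_of_first_notMem_left (h : IsTiling A B) (hlt : ∀ i < d, i ∈ A) (hd : d ∉ A)
    (hdN : d < #A * #B) : d ∈ B := by
  obtain ⟨a, ha, b, hb, hab⟩ := h.exists_add_eq hdN
  have hb0 : b ≠ 0 := by
    rintro rfl
    exact hd (hab ▸ ha)
  have hdb : d ≤ b := h.le_of_mem_right hlt hb hb0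
  rwa [show d = b by omega]

-- Otherwise `t + d = (d - r) + (t + r)` would have two representations.
theorem add_notMem_right_of_mem_left (h : IsTiling A B) (hlt : ∀ i < d, i ∈ A) (hd : d ∉ A)
    {t r : ℕ} (hdt : d ∣ t) (ht : t ∈ A) (hr0 : r ≠ 0) (hrd : r < d) : t + r ∉ B := by
  intro hB
  have hdB : d ∈ B := by
    have hle : d ≤ t + r := h.le_of_mem_right hlt hB (by omega)
    exact h.mem_right_of_first_notMem_left hlt hd (hle.trans_lt (h.lt_of_mem_right hB))
  have htr : t = d - r :=
    (h.eq_and_eq_of_add_eq ht hdB (hlt (d - r) (by omega)) hB (by omega)).1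
  have ht0 : t = 0 := Nat.eq_zero_of_dvd_of_lt hdt (by omega)
  omega

-- If `t + r = a + b` with `b ≠ 0`, then `t = (t - b) + b` is a second representation of `t`.
theorem add_mem_left_of_alignedBelow (h : IsTiling A B) {t r : ℕ}
    (hk : AlignedBelow d A B (t + r)) (hdt : d ∣ t) (hrd : r < d) (hN : t + r < #A * #B)
    (ht : t ∈ A) (hB : t + r ∉ B) : t + r ∈ A := by
  obtain ⟨a, ha, b, hb, hab⟩ := h.exists_add_eq hN
  suffices hb0 : b = 0 by rwa [← hab, hb0]
  by_contra hb0
  have hb_ne : b ≠ t + r := fun e ↦ hB (e ▸ hb)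
  have hdb : d ∣ b := hk.dvd_of_mem_right b hb (by omega)
  have hbt : b - t = 0 := Nat.eq_zero_of_dvd_of_lt (Nat.dvd_sub hdb hdt) (by omega)
  have hmem : t - b ∈ A :=
    (hk.add_mem_left_iff (t - b) r (Nat.dvd_sub hdt hdb) hrd (by omega)).1
      (by rwa [show t - b + r = a by omega])
  exact hb0 (h.eq_and_eq_of_add_eq hmem hb ht h.zero_mem_right (by omega)).2

-- If `t = a + b` with `b ≠ 0`, then `t + r = (a + r) + b` is again a sum with both terms nonzero.
theorem add_notMem_of_alignedBelow (h : IsTiling A B) {t r : ℕ}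
    (hk : AlignedBelow d A B (t + r)) (hdt : d ∣ t) (hr0 : r ≠ 0) (hrd : r < d)
    (hN : t + r < #A * #B) (ht : t ∉ A) : t + r ∉ A ∧ t + r ∉ B := by
  obtain ⟨a, ha, b, hb, hab⟩ := h.exists_add_eq (x := t) (by omega)
  have hb0 : b ≠ 0 := by
    rintro rfl
    exact ht (hab ▸ ha)
  have hda : d ∣ a := (Nat.dvd_add_left (hk.dvd_of_mem_right b hb (by omega))).1 (hab ▸ hdt)
  have har : a + r ∈ A := (hk.add_mem_left_iff a r hda hrd (by omega)).2 ha
  refine ⟨fun hA ↦ ?_, fun hB ↦ ?_⟩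
  · exact hb0 (h.eq_and_eq_of_add_eq har hb hA h.zero_mem_right (by omega)).2
  · have := (h.eq_and_eq_of_add_eq har hb h.zero_mem_left hB (by omega)).1
    omega

theorem alignedBelow_succ (h : IsTiling A B) (hlt : ∀ i < d, i ∈ A) (hd : d ∉ A) {k : ℕ}
    (hk : AlignedBelow d A B k) (hkN : k < #A * #B) : AlignedBelow d A B (k + 1) := by
  have hd0 : 0 < d := h.pos_of_notMem_left hd
  have notMem_right : ∀ t r, d ∣ t → r < d → r ≠ 0 → t + r = k → t + r ∉ B := by
    rintro t r hdt hrd hr0 rfl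
    by_cases ht : t ∈ A
    · exact h.add_notMem_right_of_mem_left hlt hd hdt ht hr0 hrd
    · exact (h.add_notMem_of_alignedBelow hk hdt hr0 hrd hkN ht).2
  constructor
  · intro b hb hbk
    rcases Nat.lt_succ_iff_lt_or_eq.1 hbk with hbk | rfl
    · exact hk.dvd_of_mem_right b hb hbk
    have hsplit : b - b % d + b % d = b := Nat.sub_add_cancel (Nat.mod_le b d)
    by_contra hdb
    exact notMem_right _ _ (Nat.dvd_sub_mod b) (Nat.mod_lt b hd0)
      (mt Nat.dvd_of_mod_eq_zero hdb) hsplit (hsplit.symm ▸ hb)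
  · intro t r hdt hrd htr
    rcases Nat.lt_succ_iff_lt_or_eq.1 htr with htr | rfl
    · exact hk.add_mem_left_iff t r hdt hrd htr
    rcases eq_or_ne r 0 with rfl | hr0
    · rfl
    refine ⟨not_imp_not.1 fun ht ↦ (h.add_notMem_of_alignedBelow hk hdt hr0 hrd hkN ht).1,
      fun ht ↦ h.add_mem_left_of_alignedBelow hk hdt hrd hkN ht
        (notMem_right t r hdt hrd hr0 rfl)⟩

theorem alignedBelow_card_mul_card (h : IsTiling A B) (hlt : ∀ i < d, i ∈ A) (hd : d ∉ A) :
    AlignedBelow d A B (#A * #B) := by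
  suffices ∀ k ≤ #A * #B, AlignedBelow d A B k from this _ le_rfl
  intro k
  induction k with
  | zero => exact fun _ ↦ ⟨by simp, by simp⟩
  | succ k ih => exact fun hk ↦ h.alignedBelow_succ hlt hd (ih (by omega)) hk

theorem dvd_of_mem_right (h : IsTiling A B) (hlt : ∀ i < d, i ∈ A) (hd : d ∉ A) {b : ℕ}
    (hb : b ∈ B) : d ∣ b :=
  (h.alignedBelow_card_mul_card hlt hd).dvd_of_mem_right b hb (h.lt_of_mem_right hb)

theorem mul_div_mem_left_iff (h : IsTiling A B) (hlt : ∀ i < d, i ∈ A) (hd : d ∉ A) (x : ℕ) :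
    d * (x / d) ∈ A ↔ x ∈ A := by
  have hd0 : 0 < d := h.pos_of_notMem_left hd
  have hmod : x % d < d := Nat.mod_lt x hd0
  have hsplit : d * (x / d) + x % d = x := Nat.div_add_mod x d
  have iff_of_lt (hx : x < #A * #B) : d * (x / d) ∈ A ↔ x ∈ A := by
    have := (h.alignedBelow_card_mul_card hlt hd).add_mem_left_iff (d * (x / d)) (x % d)
      (dvd_mul_right d _) hmod (hsplit.symm ▸ hx)
    rw [← this, hsplit]
  refine ⟨fun hx ↦ ?_, fun hx ↦ (iff_of_lt (h.lt_of_mem_left hx)).2 hx⟩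
  by_cases hdN : d < #A * #B
  · have := h.add_lt hx (h.mem_right_of_first_notMem_left hlt hd hdN)
    exact (iff_of_lt (by omega)).1 hx
  · have hzero : d * (x / d) = 0 :=
      Nat.eq_zero_of_dvd_of_lt (dvd_mul_right d _) ((h.lt_of_mem_left hx).trans_le (not_lt.1 hdN))
    exact hlt x (by omega)

end IsTiling

/-! ### Dilations -/

/-- The dilate `{c * x : x ∈ S}`. The pointwise notation `c • S` is avoided because for a natural
number `c` it can also be read as the `c`-fold sumset. -/
def dilate (c : ℕ) (S : Finset ℕ) : Finset ℕ :=
  S.image (AddMonoidHom.mulLeft c)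

/-- The set obtained from `S` by replacing each point `x` with the block
`c * x, …, c * x + c - 1`. -/
def blockDilate (c : ℕ) (S : Finset ℕ) : Finset ℕ :=
  dilate c S + range c

section Dilation

variable {c : ℕ}

theorem mem_dilate {S : Finset ℕ} {x : ℕ} : x ∈ dilate c S ↔ ∃ y ∈ S, c * y = x := by
  simp [dilate]

theorem mem_blockDilate (hc : 0 < c) {S : Finset ℕ} {x : ℕ} : x ∈ blockDilate c S ↔ x / c ∈ S := by
  simp only [blockDilate, mem_add, mem_dilate, mem_range, exists_exists_and_eq_and]
  constructor
  · rintro ⟨y, hy, i, hi, rfl⟩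
    rwa [Nat.mul_add_div hc, Nat.div_eq_of_lt hi, add_zero]
  · exact fun hx ↦ ⟨x / c, hx, x % c, Nat.mod_lt x hc, Nat.div_add_mod x c⟩

theorem dilate_injective (hc : 0 < c) : Function.Injective (dilate c) :=
  image_injective (mul_right_injective₀ hc.ne')

theorem blockDilate_injective (hc : 0 < c) : Function.Injective (blockDilate c) := by
  intro S T hST
  ext x
  have := Finset.ext_iff.1 hST (c * x)
  rwa [mem_blockDilate hc, mem_blockDilate hc, Nat.mul_div_cancel_left x hc] at this

theorem dilate_dilate (c e : ℕ) (S : Finset ℕ) : dilate c (dilate e S) = dilate (c * e) S := by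
  ext x
  simp [mem_dilate, mul_assoc]

theorem blockDilate_blockDilate {e : ℕ} (hc : 0 < c) (he : 0 < e) (S : Finset ℕ) :
    blockDilate c (blockDilate e S) = blockDilate (c * e) S := by
  ext x
  rw [mem_blockDilate hc, mem_blockDilate he, mem_blockDilate (Nat.mul_pos hc he),
    Nat.div_div_eq_div_mul]

theorem blockDilate_range (hc : 0 < c) (n : ℕ) : blockDilate c (range n) = range (c * n) := by
  ext x
  rw [mem_blockDilate hc, mem_range, mem_range, Nat.div_lt_iff_lt_mul hc, mul_comm]

theorem card_dilate (hc : 0 < c) (S : Finset ℕ) : #(dilate c S) = #S :=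
  card_image_of_injective S (mul_right_injective₀ hc.ne')

theorem card_blockDilate (hc : 0 < c) (S : Finset ℕ) : #(blockDilate c S) = c * #S := by
  have add_injOn : Set.InjOn (fun x : ℕ × ℕ ↦ x.1 + x.2) (dilate c S ×ˢ range c : Set (ℕ × ℕ)) := by
    rintro ⟨x, i⟩ ⟨hx, hi⟩ ⟨y, j⟩ ⟨hy, hj⟩ hxy
    obtain ⟨u, -, rfl⟩ := mem_dilate.1 hx
    obtain ⟨v, -, rfl⟩ := mem_dilate.1 hy
    obtain rfl : i = j := by
      have hmod : (c * u + i) % c = (c * v + j) % c := congrArg (· % c) hxy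
      rwa [Nat.mul_add_mod, Nat.mul_add_mod, Nat.mod_eq_of_lt (mem_range.1 hi),
        Nat.mod_eq_of_lt (mem_range.1 hj)] at hmod
    exact congrArg (·, i) (Nat.add_right_cancel hxy)
  rw [blockDilate, card_add_iff.2 add_injOn, card_dilate hc, card_range, mul_comm]

theorem blockDilate_add_dilate (c : ℕ) (S T : Finset ℕ) :
    blockDilate c S + dilate c T = blockDilate c (S + T) := by
  rw [blockDilate, blockDilate, add_right_comm, dilate, dilate, dilate, ← image_add]

theorem exists_dilate_eq {S : Finset ℕ} (hS : ∀ x ∈ S, c ∣ x) : ∃ T, dilate c T = S := by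
  refine ⟨S.image (· / c), ?_⟩
  rw [dilate, image_image]
  exact (image_congr fun x hx ↦ Nat.mul_div_cancel' (hS x hx)).trans image_id

theorem exists_blockDilate_eq (hc : 0 < c) {S : Finset ℕ} (hS : ∀ x, c * (x / c) ∈ S ↔ x ∈ S) :
    ∃ T, blockDilate c T = S := by
  refine ⟨S.preimage (c * ·) (mul_right_injective₀ hc.ne').injOn, ?_⟩
  ext x
  rw [mem_blockDilate hc, mem_preimage, hS]

theorem isTiling_blockDilate_dilate_iff (hc : 0 < c) {A B : Finset ℕ} :
    IsTiling (blockDilate c A) (dilate c B) ↔ IsTiling A B := by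
  have nonempty_iff : (blockDilate c A).Nonempty ↔ A.Nonempty := by
    simp [← card_pos, card_blockDilate hc, hc]
  have add_iff : blockDilate c A + dilate c B = range (#(blockDilate c A) * #(dilate c B)) ↔
      A + B = range (#A * #B) := by
    rw [blockDilate_add_dilate, card_blockDilate hc, card_dilate hc, mul_assoc,
      ← blockDilate_range hc, (blockDilate_injective hc).eq_iff]
  constructor
  · exact fun h ↦ ⟨nonempty_iff.1 h.left_nonempty, image_nonempty.1 h.right_nonempty,
      add_iff.1 h.add_eq_range⟩
  · exact fun h ↦ ⟨nonempty_iff.2 h.left_nonempty, image_nonempty.2 h.right_nonempty,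
      add_iff.2 h.add_eq_range⟩

end Dilation

theorem IsTiling.exists_blockDilate_dilate_eq {A B : Finset ℕ} (h : IsTiling A B) {p m : ℕ}
    (hp : p.Prime) (hA : #A = p ^ m) (h1 : 1 ∈ A) :
    ∃ A' B', blockDilate p A' = A ∧ dilate p B' = B := by
  obtain ⟨d, hd, hmin⟩ : ∃ d, d ∉ A ∧ ∀ i < d, i ∈ A :=
    have gap := Infinite.exists_notMem_finset A
    ⟨Nat.find gap, Nat.find_spec gap, fun i hi ↦ not_not.1 (Nat.find_min gap hi)⟩
  have hd0 : 0 < d := h.pos_of_notMem_left hd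
  have hd1 : d ≠ 1 := fun e ↦ hd (e ▸ h1)
  obtain ⟨A₀, rfl⟩ := exists_blockDilate_eq hd0 (h.mul_div_mem_left_iff hmin hd)
  obtain ⟨B₀, rfl⟩ := exists_dilate_eq fun b hb ↦ h.dvd_of_mem_right hmin hd hb
  have hdA : d ∣ p ^ m := ⟨#A₀, by rw [← hA, card_blockDilate hd0]⟩
  obtain ⟨e, rfl⟩ : p ∣ d := by
    obtain ⟨j, -, rfl⟩ := (Nat.dvd_prime_pow hp).1 hdA
    exact dvd_pow_self p fun hj ↦ hd1 (by rw [hj, pow_zero])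
  have he : 0 < e := Nat.pos_of_mul_pos_left hd0
  exact ⟨blockDilate e A₀, dilate e B₀, blockDilate_blockDilate hp.pos he A₀, dilate_dilate p e B₀⟩

/-! ### Counting tilings -/

/-- The pairs `(A, B)` with `#A = a` and `#B = b` that tile `{0, …, a * b - 1}`. -/
def tilings (a b : ℕ) : Set (Finset ℕ × Finset ℕ) :=
  {P | #P.1 = a ∧ #P.2 = b ∧ IsTiling P.1 P.2}

theorem finite_tilings (a b : ℕ) : (tilings a b).Finite := by
  refine ((range (a * b)).powerset ×ˢ (range (a * b)).powerset).finite_toSet.subset ?_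
  rintro ⟨A, B⟩ ⟨rfl, rfl, h⟩
  exact mem_product.2
    ⟨mem_powerset.2 h.left_subset_range, mem_powerset.2 h.right_subset_range⟩

theorem image_swap_tilings (a b : ℕ) : Prod.swap '' tilings a b = tilings b a := by
  rw [Set.image_swap_eq_preimage_swap]
  ext ⟨A, B⟩
  exact ⟨fun ⟨hB, hA, h⟩ ↦ ⟨hA, hB, h.symm⟩, fun ⟨hA, hB, h⟩ ↦ ⟨hB, hA, h.symm⟩⟩

theorem ncard_tilings_comm (a b : ℕ) : (tilings a b).ncard = (tilings b a).ncard := by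
  rw [← image_swap_tilings, Set.ncard_image_of_injective _ Prod.swap_injective]

theorem tilings_one_right {a : ℕ} (ha : 0 < a) : tilings a 1 = {(range a, {0})} := by
  ext ⟨A, B⟩
  rw [Set.mem_singleton_iff, Prod.mk.injEq]
  constructor
  · rintro ⟨rfl, hB, h⟩
    obtain ⟨b, rfl⟩ := card_eq_one.1 hB
    obtain rfl : 0 = b := mem_singleton.1 h.zero_mem_right
    have hA : A + {0} = range (#A * 1) := h.add_eq_range
    rw [singleton_zero, add_zero, mul_one] at hA
    exact ⟨hA, rfl⟩
  · rintro ⟨rfl, rfl⟩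
    refine ⟨card_range a, card_singleton 0, nonempty_range_iff.2 ha.ne', singleton_nonempty 0, ?_⟩
    rw [card_singleton, card_range, mul_one, singleton_zero, add_zero]

theorem tilings_inter_one_mem_left {p : ℕ} (hp : p.Prime) (m b : ℕ) :
    tilings (p ^ (m + 1)) b ∩ {P | 1 ∈ P.1} =
      Prod.map (blockDilate p) (dilate p) '' tilings (p ^ m) b := by
  have card_iff (A : Finset ℕ) : #(blockDilate p A) = p ^ (m + 1) ↔ #A = p ^ m := by
    rw [card_blockDilate hp.pos, pow_succ', Nat.mul_right_inj hp.ne_zero]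
  ext ⟨A, B⟩
  constructor
  · rintro ⟨⟨hA, hB, h⟩, h1⟩
    obtain ⟨A', B', rfl, rfl⟩ := h.exists_blockDilate_dilate_eq hp hA h1
    exact ⟨(A', B'), ⟨(card_iff A').1 hA, card_dilate hp.pos B' ▸ hB,
      (isTiling_blockDilate_dilate_iff hp.pos).1 h⟩, rfl⟩
  · rintro ⟨⟨A', B'⟩, ⟨hA, hB, h⟩, ⟨⟩⟩
    have h1 : 1 ∈ blockDilate p A' := by
      rw [mem_blockDilate hp.pos, Nat.div_eq_of_lt hp.one_lt]
      exact h.zero_mem_left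
    exact ⟨⟨(card_iff A').2 hA, (card_dilate hp.pos B').trans hB,
      (isTiling_blockDilate_dilate_iff hp.pos).2 h⟩, h1⟩

theorem ncard_tilings_inter_one_mem_left {p : ℕ} (hp : p.Prime) (m b : ℕ) :
    (tilings (p ^ (m + 1)) b ∩ {P | 1 ∈ P.1}).ncard = (tilings (p ^ m) b).ncard := by
  rw [tilings_inter_one_mem_left hp, Set.ncard_image_of_injective _
    ((blockDilate_injective hp.pos).prodMap (dilate_injective hp.pos))]

theorem image_swap_tilings_inter_one_mem_left {a b : ℕ} (hab : 1 < a * b) :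
    Prod.swap '' (tilings b a ∩ {P | 1 ∈ P.1}) = tilings a b \ {P | 1 ∈ P.1} := by
  rw [Set.image_inter Prod.swap_injective, image_swap_tilings, Set.image_swap_eq_preimage_swap]
  ext ⟨A, B⟩
  refine and_congr_right ?_
  rintro ⟨rfl, rfl, h⟩
  exact h.one_mem_right_iff hab

theorem ncard_tilings_eq_add {a b : ℕ} (hab : 1 < a * b) :
    (tilings a b).ncard =
      (tilings a b ∩ {P | 1 ∈ P.1}).ncard + (tilings b a ∩ {P | 1 ∈ P.1}).ncard := by
  rw [← Set.ncard_inter_add_ncard_sdiff_eq_ncard _ {P | 1 ∈ P.1} (finite_tilings a b),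
    ← image_swap_tilings_inter_one_mem_left hab,
    Set.ncard_image_of_injective _ Prod.swap_injective]

theorem ncard_tilings_prime_pow {p q : ℕ} (hp : p.Prime) (hq : q.Prime) (m k : ℕ) :
    (tilings (p ^ m) (q ^ k)).ncard = (m + k).choose m := by
  induction m generalizing k with
  | zero =>
    rw [pow_zero, ncard_tilings_comm, tilings_one_right (pow_pos hq.pos k), Set.ncard_singleton,
      Nat.choose_zero_right]
  | succ m ihm =>
    induction k with
    | zero =>
      rw [pow_zero, tilings_one_right (pow_pos hp.pos _), Set.ncard_singleton, add_zero,
        Nat.choose_self]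
    | succ k ihk =>
      have hN : 1 < p ^ (m + 1) * q ^ (k + 1) :=
        one_lt_mul_of_lt_of_le (Nat.one_lt_pow m.succ_ne_zero hp.one_lt) (pow_pos hq.pos _)
      calc (tilings (p ^ (m + 1)) (q ^ (k + 1))).ncard
          = (tilings (p ^ m) (q ^ (k + 1))).ncard + (tilings (p ^ (m + 1)) (q ^ k)).ncard := by
            rw [ncard_tilings_eq_add hN, ncard_tilings_inter_one_mem_left hp,
              ncard_tilings_inter_one_mem_left hq, ncard_tilings_comm (q ^ k)]
        _ = (m + (k + 1)).choose m + (m + (k + 1)).choose (m + 1) := by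
            rw [ihm, ihk, add_right_comm m 1 k, add_assoc m k 1]
        _ = (m + 1 + (k + 1)).choose (m + 1) := by
            rw [add_right_comm m 1 (k + 1), Nat.choose_succ_succ']

/-! ### Difference sets and tilings -/

/-- The reflection `{N - x : x ∈ S}` of a subset `S` of `{0, …, N}`. -/
def reflectBelow (N : ℕ) (S : Finset ℕ) : Finset ℕ :=
  S.image (N - ·)

section Reflection

variable {N : ℕ} {S T : Finset ℕ}

theorem reflectBelow_subset (N : ℕ) (S : Finset ℕ) : reflectBelow N S ⊆ range (N + 1) :=
  image_subset_iff.2 fun x _ ↦ mem_range_succ_iff.2 (Nat.sub_le N x)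

theorem reflectBelow_reflectBelow (hS : S ⊆ range (N + 1)) :
    reflectBelow N (reflectBelow N S) = S := by
  rw [reflectBelow, reflectBelow, image_image]
  exact (image_congr fun x hx ↦ Nat.sub_sub_self (mem_range_succ_iff.1 (hS hx))).trans image_id

theorem card_reflectBelow (hS : S ⊆ range (N + 1)) : #(reflectBelow N S) = #S := by
  refine card_image_of_injOn fun x hx y hy hxy ↦ ?_
  exact (tsub_right_inj (mem_range_succ_iff.1 (hS hx)) (mem_range_succ_iff.1 (hS hy))).1 hxy

theorem image_sub_eq_Icc_iff (hT : T ⊆ range (N + 1)) :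
    (S ×ˢ T).image (fun x : ℕ × ℕ ↦ (x.2 : ℤ) - (x.1 : ℤ)) = Icc (1 : ℤ) N ↔
      S + reflectBelow N T = range N := by
  have sub_injective : Function.Injective fun w : ℕ ↦ (N : ℤ) - w :=
    fun v w hvw ↦ Nat.cast_injective (sub_right_injective hvw)
  have image_differences : (S ×ˢ T).image (fun x : ℕ × ℕ ↦ (x.2 : ℤ) - (x.1 : ℤ)) =
      (S + reflectBelow N T).image fun w : ℕ ↦ (N : ℤ) - w := by
    rw [reflectBelow, ← image_add_product, ← image_id (s := S), ← prodMap_image_product,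
      image_image, image_image, image_id]
    refine image_congr fun x hx ↦ ?_
    have hle : x.2 ≤ N := mem_range_succ_iff.1 (hT (mem_product.1 hx).2)
    simp only [Function.comp_apply, Prod.map_fst, Prod.map_snd, id]
    omega
  have Icc_eq_image : Icc (1 : ℤ) N = (range N).image fun w : ℕ ↦ (N : ℤ) - w := by
    ext z
    simp only [mem_Icc, mem_image, mem_range]
    exact ⟨fun hz ↦ ⟨(N - z).toNat, by omega, by omega⟩, by rintro ⟨w, hw, rfl⟩; omega⟩
  rw [image_differences, Icc_eq_image, (image_injective sub_injective).eq_iff]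

end Reflection

theorem gracefulCount_eq_ncard_tilings {a b : ℕ} (ha : 0 < a) (hb : 0 < b) :
    gracefulCount a b = (tilings a b).ncard := by
  have range_subset : range (a * b) ⊆ range (a * b + 1) := range_mono (Nat.le_succ _)
  refine (Set.InvOn.bijOn (f := Prod.map id (reflectBelow (a * b)))
    (f' := Prod.map id (reflectBelow (a * b))) ⟨?_, ?_⟩ ?_ ?_).ncard_eq
  · rintro ⟨S, T⟩ ⟨-, -, -, hT, -⟩
    exact congrArg (S, ·) (reflectBelow_reflectBelow hT)
  · rintro ⟨A, B⟩ ⟨rfl, rfl, h⟩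
    exact congrArg (A, ·) (reflectBelow_reflectBelow (h.right_subset_range.trans range_subset))
  · rintro ⟨S, T⟩ ⟨rfl, rfl, -, hT, hST⟩
    have hcard : #(reflectBelow (#S * #T) T) = #T := card_reflectBelow hT
    have hadd : S + reflectBelow (#S * #T) T = range (#S * #(reflectBelow (#S * #T) T)) := by
      rw [hcard]
      exact (image_sub_eq_Icc_iff hT).1 (by rw [Nat.cast_mul]; exact hST)
    exact ⟨rfl, hcard, card_pos.1 ha, card_pos.1 (hcard.symm ▸ hb), hadd⟩
  · rintro ⟨A, B⟩ ⟨rfl, rfl, h⟩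
    have hB : B ⊆ range (#A * #B + 1) := h.right_subset_range.trans range_subset
    have hT : reflectBelow (#A * #B) B ⊆ range (#A * #B + 1) := reflectBelow_subset _ B
    have hdiff := (image_sub_eq_Icc_iff (S := A) hT).2
      (by rw [reflectBelow_reflectBelow hB]; exact h.add_eq_range)
    rw [Nat.cast_mul] at hdiff
    exact ⟨rfl, card_reflectBelow hB, h.left_subset_range.trans range_subset, hT, hdiff⟩

theorem stmt_11_general (m k : ℕ) {p q : ℕ} (hp : p.Prime) (hq : q.Prime) :
    gracefulCount (p ^ m) (q ^ k) = (m + k).choose m := by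
  rw [gracefulCount_eq_ncard_tilings (pow_pos hp.pos m) (pow_pos hq.pos k),
    ncard_tilings_prime_pow hp hq]

end

/-- For a positive integer `n` and primes `p`, `q`,
`𝒜(pⁿ, qⁿ) = C(2n, n)`. -/
theorem stmt_11 (n p q : ℕ) (hn : 0 < n) (hp : p.Prime) (hq : q.Prime) :
    gracefulCount (p ^ n) (q ^ n) = (2 * n).choose n := by
  rw [stmt_11_general n n hp hq, two_mul]
end

section
/- Let a and b be positive integers and let c be a positive integer. Suppose (S', S'') is a pair of finite sets of nonnegative integers with |S'| = a, |S''| = b, S', S'' ⊆ {0, 1, ..., ab}, and {y − x : x ∈ S', y ∈ S''} = {1, 2, ..., ab}. Define T' = {c·x + z : x ∈ S', 0 ≤ z < c} and T'' = {c·y : y ∈ S''}. Then |T'| = ac, |T''| = b, T', T'' ⊆ {0, 1, ..., abc}, and {y − x : x ∈ T', y ∈ T''} = {1, 2, ..., abc}. (Multiplication by c on the left transforms an α-graceful labeling of K_{a,b} into one of K_{ac,b}.) -/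
/-!
A difference of the new pair is `c * y - (c * x + z) = c * (y - x) - z` with `0 ≤ z < c`. As
`d = y - x` runs through `1, …, ab`, the blocks `{c * d - z : 0 ≤ z < c}`, that is
`{c * (d - 1) + 1, …, c * d}`, tile `{1, …, abc}`. The cardinalities come from uniqueness of
division by `c`, and `T' ⊆ {0, …, abc}` from every `x ∈ S'` being smaller than some `y ≤ ab`.
-/

section

open Finset
open scoped Pointwise

/-- The set of integer differences `y - x` with `x ∈ S` and `y ∈ T`; the subtraction takes place
in `ℤ`, so it is not truncated. -/
def differenceSet (S T : Finset ℕ) : Finset ℤ :=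
  (S ×ˢ T).image fun q => (q.2 : ℤ) - (q.1 : ℤ)

/-- The blow-up of `S` by the factor `c`: each `x ∈ S` is replaced by the block of the `c`
consecutive numbers `c * x, …, c * x + c - 1`. It is the first component of the product of `c`
with a pair of label sets. -/
def blowUp (c : ℕ) (S : Finset ℕ) : Finset ℕ :=
  (S ×ˢ range c).image fun q => c * q.1 + q.2

variable {S T : Finset ℕ} {c N : ℕ}

theorem mem_differenceSet {d : ℤ} :
    d ∈ differenceSet S T ↔ ∃ x ∈ S, ∃ y ∈ T, (y : ℤ) - x = d := by
  simp only [differenceSet, mem_image, mem_product, Prod.exists, and_assoc,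
    exists_and_left]

theorem mem_blowUp {t : ℕ} : t ∈ blowUp c S ↔ ∃ x ∈ S, ∃ z < c, c * x + z = t := by
  simp only [blowUp, mem_image, mem_product, mem_range, Prod.exists, and_assoc,
    exists_and_left]

theorem card_blowUp (c : ℕ) (S : Finset ℕ) : #(blowUp c S) = #S * c := by
  rw [blowUp, card_image_of_injOn, card_product, card_range]
  rintro ⟨x, z⟩ hxz ⟨x', z'⟩ hxz' (h : c * x + z = c * x' + z')
  have hz : z < c := mem_range.1 (mem_product.1 hxz).2
  have hz' : z' < c := mem_range.1 (mem_product.1 hxz').2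
  have hquot : x = x' := by
    simpa [Nat.mul_add_div (Nat.zero_lt_of_lt hz), Nat.div_eq_of_lt hz, Nat.div_eq_of_lt hz']
      using congrArg (· / c) h
  have hrem : z = z' := by
    simpa [Nat.mod_eq_of_lt hz, Nat.mod_eq_of_lt hz'] using congrArg (· % c) h
  rw [hquot, hrem]

theorem blowUp_subset_range (c : ℕ) (hS : S ⊆ range N) : blowUp c S ⊆ range (c * N) := by
  intro t ht
  obtain ⟨x, hx, z, hz, rfl⟩ := mem_blowUp.1 ht
  have hxN : x + 1 ≤ N := mem_range.1 (hS hx)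
  rw [mem_range]
  calc c * x + z < c * (x + 1) := by rw [mul_add_one]; gcongr
    _ ≤ c * N := by gcongr

theorem image_mul_subset_range_succ (c : ℕ) (hT : T ⊆ range (N + 1)) :
    T.image (c * ·) ⊆ range (c * N + 1) := by
  refine image_subset_iff.2 fun y hy => mem_range_succ_iff.2 ?_
  exact Nat.mul_le_mul_left c (mem_range_succ_iff.1 (hT hy))

theorem subset_range_of_differenceSet_pos (hT : T.Nonempty) (hTN : T ⊆ range (N + 1))
    (hpos : ∀ d ∈ differenceSet S T, 0 < d) : S ⊆ range N := by
  intro x hx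
  obtain ⟨y, hy⟩ := hT
  have hyN : y ≤ N := mem_range_succ_iff.1 (hTN hy)
  have hxy : (0 : ℤ) < y - x := hpos _ (mem_differenceSet.2 ⟨x, hx, y, hy, rfl⟩)
  rw [mem_range]
  lia

theorem differenceSet_blowUp_image_mul (c : ℕ) (S T : Finset ℕ) :
    differenceSet (blowUp c S) (T.image (c * ·)) =
      (differenceSet S T).image ((c : ℤ) * ·) - Ico (0 : ℤ) c := by
  ext n
  simp only [mem_differenceSet, mem_sub, mem_Ico, mem_image]
  constructor
  · rintro ⟨_, ht, _, ⟨y, hy, rfl⟩, rfl⟩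
    obtain ⟨x, hx, z, hz, rfl⟩ := mem_blowUp.1 ht
    refine ⟨_, ⟨_, ⟨x, hx, y, hy, rfl⟩, rfl⟩, z, ⟨by positivity, mod_cast hz⟩, ?_⟩
    push_cast
    ring
  · rintro ⟨_, ⟨_, ⟨x, hx, y, hy, rfl⟩, rfl⟩, z, ⟨hz₀, hzc⟩, rfl⟩
    lift z to ℕ using hz₀
    refine ⟨_, mem_blowUp.2 ⟨x, hx, z, mod_cast hzc, rfl⟩, _, ⟨y, hy, rfl⟩, ?_⟩
    push_cast
    ring

theorem image_mul_Ioc_sub_Ico_zero {k : ℤ} (hk : 0 ≤ k) (m n : ℤ) :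
    (Ioc m n).image (k * ·) - Ico 0 k = Ioc (k * m) (k * n) := by
  obtain rfl | hk := hk.eq_or_lt
  · simp
  ext t
  simp only [mem_sub, mem_image, mem_Ioc, mem_Ico]
  constructor
  · rintro ⟨_, ⟨d, ⟨hmd, hdn⟩, rfl⟩, z, ⟨hz₀, hzk⟩, rfl⟩
    have hlower : k * (m + 1) ≤ k * d := by gcongr; exact hmd
    have hupper : k * d ≤ k * n := by gcongr
    constructor <;> linarith
  · rintro ⟨hmt, htn⟩
    -- `t` lies in the block of `d = ⌈t / k⌉ = -⌊-t / k⌋`, at offset `k * d - t = -t mod k`.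
    have hdiv := Int.mul_ediv_add_emod (-t) k
    have hlower : -t / k < -m := Int.ediv_lt_of_lt_mul hk (by linarith)
    have hupper : -n ≤ -t / k := Int.le_ediv_of_mul_le hk (by linarith)
    refine ⟨_, ⟨-(-t / k), ⟨by linarith, by linarith⟩, rfl⟩, -t % k,
      ⟨Int.emod_nonneg _ hk.ne', Int.emod_lt_of_pos _ hk⟩, by linarith⟩

theorem differenceSet_blowUp_image_mul_eq_Icc (c : ℕ)
    (hST : differenceSet S T = Icc 1 (N : ℤ)) :
    differenceSet (blowUp c S) (T.image (c * ·)) = Icc 1 ((N : ℤ) * c) := by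
  have Icc_one (n : ℤ) : Icc 1 n = Ioc 0 n := by rw [← Icc_add_one_left_eq_Ioc, zero_add]
  rw [differenceSet_blowUp_image_mul, hST, Icc_one, image_mul_Ioc_sub_Ico_zero c.cast_nonneg,
    mul_zero, mul_comm, Icc_one]

theorem stmt_18_general (hc : 0 < c) (hT : T.Nonempty) (hTN : T ⊆ range (N + 1))
    (hST : differenceSet S T = Icc 1 (N : ℤ)) :
    #(blowUp c S) = #S * c ∧
    #(T.image (c * ·)) = #T ∧
    blowUp c S ⊆ range (N * c + 1) ∧
    T.image (c * ·) ⊆ range (N * c + 1) ∧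
    differenceSet (blowUp c S) (T.image (c * ·)) = Icc 1 ((N : ℤ) * c) := by
  have hpos : ∀ d ∈ differenceSet S T, 0 < d := fun d hd => (mem_Icc.1 (hST ▸ hd)).1
  have hSN : S ⊆ range N := subset_range_of_differenceSet_pos hT hTN hpos
  rw [mul_comm N c]
  exact ⟨card_blowUp c S, card_image_of_injective T (mul_right_injective₀ hc.ne'),
    (blowUp_subset_range c hSN).trans (range_mono (Nat.le_succ _)),
    image_mul_subset_range_succ c hTN, differenceSet_blowUp_image_mul_eq_Icc c hST⟩

end

/-- multiplication by `c` on the left. Let `a, b, c` be positive integers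
and let `(S', S'')` be a pair of finite sets of nonnegative integers with `|S'| = a`,
`|S''| = b`, `S', S'' ⊆ {0, …, ab}`, and `{y − x : x ∈ S', y ∈ S''} = {1, …, ab}`. Then
`T' = {cx + z : x ∈ S', 0 ≤ z < c}` and `T'' = {cy : y ∈ S''}` satisfy `|T'| = ac`,
`|T''| = b`, `T', T'' ⊆ {0, …, abc}`, and `{y − x : x ∈ T', y ∈ T''} = {1, …, abc}`. -/
theorem stmt_18 (a b c : ℕ) (ha : 0 < a) (hb : 0 < b) (hc : 0 < c)
    (S₁ S₂ : Finset ℕ) (h₁ : S₁.card = a) (h₂ : S₂.card = b)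
    (hs₁ : S₁ ⊆ Finset.range (a * b + 1)) (hs₂ : S₂ ⊆ Finset.range (a * b + 1))
    (hdiff : Finset.image (fun q : ℕ × ℕ => (q.2 : ℤ) - (q.1 : ℤ)) (S₁ ×ˢ S₂) =
      Finset.Icc (1 : ℤ) ((a : ℤ) * b)) :
    ((S₁ ×ˢ Finset.range c).image (fun q : ℕ × ℕ => c * q.1 + q.2)).card = a * c ∧
    (S₂.image (fun y => c * y)).card = b ∧
    (S₁ ×ˢ Finset.range c).image (fun q : ℕ × ℕ => c * q.1 + q.2) ⊆
      Finset.range (a * b * c + 1) ∧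
    S₂.image (fun y => c * y) ⊆ Finset.range (a * b * c + 1) ∧
    Finset.image (fun q : ℕ × ℕ => (q.2 : ℤ) - (q.1 : ℤ))
        (((S₁ ×ˢ Finset.range c).image (fun q : ℕ × ℕ => c * q.1 + q.2)) ×ˢ
          (S₂.image (fun y => c * y))) =
      Finset.Icc (1 : ℤ) ((a : ℤ) * b * c) := by
  subst h₁ h₂
  rw [← Nat.cast_mul] at hdiff ⊢
  exact stmt_18_general hc (Finset.card_pos.1 hb) hs₂ hdiff
end

section
/- Let a and b be positive integers and let c be a positive integer. Suppose (S', S'') is a pair of finite sets of nonnegative integers with |S'| = a, |S''| = b, S', S'' ⊆ {0, 1, ..., ab}, and {y − x : x ∈ S', y ∈ S''} = {1, 2, ..., ab}. Define U' = {c·x : x ∈ S'} and U'' = {c·y − z : y ∈ S'', 0 ≤ z < c}. Then |U'| = a, |U''| = bc, U', U'' ⊆ {0, 1, ..., abc}, and {y − x : x ∈ U', y ∈ U''} = {1, 2, ..., abc}. (Multiplication by c on the right transforms an α-graceful labeling of K_{a,b} into one of K_{a,bc}.) -/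
/-!
Write `I = [0, c)`. Then `U'' - U' = (cS'' - I) - cS' = c(S'' - S') - I`, so the difference set is
found from `c[1, N] - I = [1, cN]`, which is division by `c` with the remainder subtracted.
Uniqueness of the quotient and remainder gives `|U''| = |S''| c`.
-/

open Finset
-- Dilates are written `S.image (c * ·)`: with this scope open, `c • S` is ambiguous between the
-- dilate and the iterated sumset.
open scoped Pointwise

section Product

variable {α β G : Type*} [DecidableEq G] [Sub G] (f : α → G) (g : β → G) (S : Finset α)
  (T : Finset β)

theorem image_product_sub :
    (S ×ˢ T).image (fun p ↦ f p.1 - g p.2) = S.image f - T.image g := by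
  rw [Finset.sub_def, ← prodMap_image_product, image_image]
  rfl

theorem image_product_sub_swap :
    (S ×ˢ T).image (fun p ↦ g p.2 - f p.1) = T.image g - S.image f := by
  classical
  rw [← image_product_sub, ← image_swap_product, image_image]
  rfl

end Product

section Dilate

variable {c : ℤ}

theorem injOn_mul_sub_Ico :
    Set.InjOn (fun p : ℤ × ℤ ↦ c * p.1 - p.2) {p | p.2 ∈ Ico 0 c} := by
  rintro ⟨y, z⟩ (hz : z ∈ Ico 0 c) ⟨y', z'⟩ (hz' : z' ∈ Ico 0 c) h
  obtain ⟨hz₀, hzc⟩ := Finset.mem_Ico.mp hz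
  obtain ⟨hz₀', hzc'⟩ := Finset.mem_Ico.mp hz'
  dsimp only at h
  have hrem : z = z' := by
    have hmod : z ≡ z' [ZMOD c] :=
      Int.modEq_iff_dvd.mpr ⟨y' - y, by linear_combination h⟩
    rwa [Int.ModEq, Int.emod_eq_of_lt hz₀ hzc, Int.emod_eq_of_lt hz₀' hzc'] at hmod
  have hquot : y = y' :=
    mul_left_cancel₀ (hz₀.trans_lt hzc).ne' (by linear_combination h + hrem)
  rw [hquot, hrem]

theorem card_image_mul_sub_Ico (c : ℤ) (S : Finset ℤ) :
    #(S.image (c * ·) - Ico 0 c) = #S * c.toNat := by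
  have himage : S.image (c * ·) - Ico 0 c = (S ×ˢ Ico 0 c).image fun p ↦ c * p.1 - p.2 := by
    simpa only [id, image_id] using (image_product_sub (c * ·) id S (Ico 0 c)).symm
  have hinj : Set.InjOn (fun p : ℤ × ℤ ↦ c * p.1 - p.2) ↑(S ×ˢ Ico 0 c) :=
    injOn_mul_sub_Ico.mono fun _ hp ↦ (mem_product.mp hp).2
  rw [himage, card_image_of_injOn hinj, card_product, Int.card_Ico, sub_zero]

theorem image_mul_Icc_one_sub_Ico (hc : 0 < c) (N : ℤ) :
    (Icc 1 N).image (c * ·) - Ico 0 c = Icc 1 (c * N) := by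
  ext n
  simp only [mem_sub, mem_image, mem_Icc, mem_Ico]
  constructor
  · rintro ⟨_, ⟨m, ⟨hm₁, hmN⟩, rfl⟩, z, ⟨hz₀, hzc⟩, rfl⟩
    have hlower : c * 1 ≤ c * m := mul_le_mul_of_nonneg_left hm₁ hc.le
    have hupper : c * m ≤ c * N := mul_le_mul_of_nonneg_left hmN hc.le
    constructor <;> lia
  · rintro ⟨hn₁, hnN⟩
    -- The quotient is `⌈n / c⌉ = (n - 1) / c + 1`.
    have hdiv := Int.emod_add_mul_ediv (n - 1) c
    have hmod₀ := Int.emod_nonneg (n - 1) hc.ne'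
    have hmodc := Int.emod_lt_of_pos (n - 1) hc
    have hquot₀ : 0 ≤ (n - 1) / c := Int.ediv_nonneg (by lia) hc.le
    have hquotN : (n - 1) / c < N := Int.ediv_lt_of_lt_mul hc (by lia)
    exact ⟨_, ⟨(n - 1) / c + 1, ⟨by lia, by lia⟩, rfl⟩, c - 1 - (n - 1) % c, ⟨by lia, by lia⟩,
      by linear_combination hdiv⟩

theorem image_mul_sub_Ico_sub_image_mul (hc : 0 < c) {S T : Finset ℤ} {N : ℤ}
    (h : T - S = Icc 1 N) :
    T.image (c * ·) - Ico 0 c - S.image (c * ·) = Icc 1 (c * N) := by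
  have hmul : (T - S).image (c * ·) = T.image (c * ·) - S.image (c * ·) :=
    image_image₂_distrib fun _ _ ↦ mul_sub ..
  rw [sub_right_comm, ← hmul, h, image_mul_Icc_one_sub_Ico hc]

end Dilate

section NatCast

variable {R : Type*} [DecidableEq R]

theorem image_cast_image_mul [NonAssocSemiring R] (c : ℕ) (S : Finset ℕ) :
    (S.image (c * ·)).image (Nat.cast : ℕ → R) = (S.image Nat.cast).image ((c : R) * ·) :=
  image_comm fun _ ↦ Nat.cast_mul ..

theorem image_cast_image_mul_sub [NonAssocRing R] (c : ℕ) {T : Finset ℕ} (hT : ∀ y ∈ T, 0 < y) :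
    ((T ×ˢ range c).image fun q ↦ c * q.1 - q.2).image (Nat.cast : ℕ → R) =
      (T.image Nat.cast).image ((c : R) * ·) - (range c).image Nat.cast := by
  have hcast : ∀ q ∈ T ×ˢ range c, ((c * q.1 - q.2 : ℕ) : R) = c * q.1 - q.2 := by
    intro q hq
    obtain ⟨hy, hz⟩ := mem_product.mp hq
    have hle : q.2 ≤ c * q.1 :=
      (mem_range.mp hz).le.trans (Nat.le_mul_of_pos_right c (hT _ hy))
    rw [Nat.cast_sub hle, Nat.cast_mul]
  calc
    _ = (T ×ˢ range c).image fun q ↦ (c : R) * q.1 - q.2 := by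
      rw [image_image]; exact image_congr hcast
    _ = T.image (fun y : ℕ ↦ (c : R) * y) - (range c).image Nat.cast :=
      image_product_sub (fun y : ℕ ↦ (c : R) * y) Nat.cast T (range c)
    _ = _ := by rw [image_image]; rfl

theorem image_cast_image_mul_sub_range (c : ℕ) {T : Finset ℕ} (hT : ∀ y ∈ T, 0 < y) :
    ((T ×ˢ range c).image fun q ↦ c * q.1 - q.2).image (Nat.cast : ℕ → ℤ) =
      (T.image Nat.cast).image ((c : ℤ) * ·) - Ico 0 (c : ℤ) := by
  have hrange : (range c).image (Nat.cast : ℕ → ℤ) = Ico 0 (c : ℤ) :=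
    coe_injective <| by simpa using Nat.image_cast_int_Iio c
  rw [image_cast_image_mul_sub c hT, hrange]

theorem card_image_mul_sub_range (c : ℕ) {T : Finset ℕ} (hT : ∀ y ∈ T, 0 < y) :
    #((T ×ˢ range c).image fun q ↦ c * q.1 - q.2) = #T * c := by
  rw [← card_image_of_injective _ (Nat.cast_injective (R := ℤ)),
    image_cast_image_mul_sub_range c hT, card_image_mul_sub_Ico,
    card_image_of_injective _ Nat.cast_injective, Int.toNat_natCast]

end NatCast

theorem image_mul_sub_subset_range {T : Finset ℕ} {N : ℕ} (c : ℕ) (Z : Finset ℕ)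
    (hT : T ⊆ range (N + 1)) :
    (T ×ˢ Z).image (fun q ↦ c * q.1 - q.2) ⊆ range (N * c + 1) := by
  simp only [image_subset_iff, mem_product, mem_range_succ_iff]
  rintro ⟨y, z⟩ ⟨hy, -⟩
  calc
    c * y - z ≤ c * y := Nat.sub_le ..
    _ ≤ c * N := Nat.mul_le_mul_left c (mem_range_succ_iff.mp (hT hy))
    _ = N * c := Nat.mul_comm ..

theorem image_mul_subset_range {S : Finset ℕ} {N : ℕ} (c : ℕ) (hS : S ⊆ range (N + 1)) :
    S.image (c * ·) ⊆ range (N * c + 1) := by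
  simp only [image_subset_iff, mem_range_succ_iff]
  intro x hx
  rw [Nat.mul_comm]
  exact Nat.mul_le_mul_right c (mem_range_succ_iff.mp (hS hx))

theorem stmt_19_general {c N : ℕ} (hc : 0 < c) {S₁ S₂ : Finset ℕ} (hS₁ : S₁.Nonempty)
    (hs₁ : S₁ ⊆ range (N + 1)) (hs₂ : S₂ ⊆ range (N + 1))
    (hdiff : (S₁ ×ˢ S₂).image (fun q ↦ (q.2 : ℤ) - q.1) = Icc 1 (N : ℤ)) :
    #(S₁.image fun x ↦ c * x) = #S₁ ∧
    #((S₂ ×ˢ range c).image fun q ↦ c * q.1 - q.2) = #S₂ * c ∧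
    S₁.image (fun x ↦ c * x) ⊆ range (N * c + 1) ∧
    (S₂ ×ˢ range c).image (fun q ↦ c * q.1 - q.2) ⊆ range (N * c + 1) ∧
    (S₁.image (fun x ↦ c * x) ×ˢ (S₂ ×ˢ range c).image (fun q ↦ c * q.1 - q.2)).image
      (fun q ↦ (q.2 : ℤ) - q.1) = Icc 1 ((N : ℤ) * c) := by
  have hpos : ∀ y ∈ S₂, 0 < y := by
    intro y hy
    obtain ⟨x, hx⟩ := hS₁
    have hmem : (y : ℤ) - x ∈ Icc 1 (N : ℤ) :=
      hdiff ▸ mem_image_of_mem (fun q : ℕ × ℕ ↦ (q.2 : ℤ) - q.1) (mk_mem_product hx hy)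
    have hone := (mem_Icc.mp hmem).1
    lia
  refine ⟨card_image_of_injective _ (mul_right_injective₀ hc.ne'), card_image_mul_sub_range c hpos,
    image_mul_subset_range c hs₁, image_mul_sub_subset_range c _ hs₂, ?_⟩
  rw [image_product_sub_swap] at hdiff ⊢
  rw [image_cast_image_mul_sub_range c hpos, image_cast_image_mul,
    image_mul_sub_Ico_sub_image_mul (Nat.cast_pos.mpr hc) hdiff, mul_comm]

/-- multiplication by `c` on the right. Let `a, b, c` be positive integers
and let `(S', S'')` be a pair of finite sets of nonnegative integers with `|S'| = a`,
`|S''| = b`, `S', S'' ⊆ {0, …, ab}`, and `{y − x : x ∈ S', y ∈ S''} = {1, …, ab}`. Then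
`U' = {cx : x ∈ S'}` and `U'' = {cy − z : y ∈ S'', 0 ≤ z < c}` satisfy `|U'| = a`,
`|U''| = bc`, `U', U'' ⊆ {0, …, abc}`, and `{y − x : x ∈ U', y ∈ U''} = {1, …, abc}`. -/
theorem stmt_19 (a b c : ℕ) (ha : 0 < a) (hb : 0 < b) (hc : 0 < c)
    (S₁ S₂ : Finset ℕ) (h₁ : S₁.card = a) (h₂ : S₂.card = b)
    (hs₁ : S₁ ⊆ Finset.range (a * b + 1)) (hs₂ : S₂ ⊆ Finset.range (a * b + 1))
    (hdiff : Finset.image (fun q : ℕ × ℕ => (q.2 : ℤ) - (q.1 : ℤ)) (S₁ ×ˢ S₂) =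
      Finset.Icc (1 : ℤ) ((a : ℤ) * b)) :
    (S₁.image (fun x => c * x)).card = a ∧
    ((S₂ ×ˢ Finset.range c).image (fun q : ℕ × ℕ => c * q.1 - q.2)).card = b * c ∧
    S₁.image (fun x => c * x) ⊆ Finset.range (a * b * c + 1) ∧
    (S₂ ×ˢ Finset.range c).image (fun q : ℕ × ℕ => c * q.1 - q.2) ⊆
      Finset.range (a * b * c + 1) ∧
    Finset.image (fun q : ℕ × ℕ => (q.2 : ℤ) - (q.1 : ℤ))
        ((S₁.image (fun x => c * x)) ×ˢ
          ((S₂ ×ˢ Finset.range c).image (fun q : ℕ × ℕ => c * q.1 - q.2))) =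
      Finset.Icc (1 : ℤ) ((a : ℤ) * b * c) := by
  subst h₁ h₂
  exact_mod_cast stmt_19_general hc (card_pos.mp ha) hs₁ hs₂ (by exact_mod_cast hdiff)
end
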